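/- The determinant of C satisfies det(C) = r^{(r−1)/2} · ∑_{ξ ∈ ZMod r} θ^{ξ.val·(ξ.val+r)/2}, and also det(C) = ε · r^{(r−1)/2} · ∑_{ξ ∈ ZMod r} θ^{(ξ·ξ).val}, where ε ∈ 𝔽 is the image of the Legendre symbol (2/r) ∈ {±1} ⊆ ℤ. -/

import Mathlib

/-!
Let `ψ` be a primitive additive character of a finite commutative ring of order `q` in which
`h = 1 / 2` exists. The identity `i j = h i² + h j² - h (i - j)²` factors the matrix
`(ψ (i j))` as `D T D`, where `D` is diagonal with entries `ψ (h i²)` and `T` is circulant.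
The matrix `(ψ (i j))` diagonalises every circulant, and completing the square shows that the
eigenvalues of `T` are the `ψ (h k²) G(-h)`, where `G(a) = ∑ ψ (a x²)`. Hence the determinant is
`(∏ ψ (h i²))³ G(-h)^q`. The first factor is `1`: the substitution `x ↦ 2 x` gives
`3 ∑ x² = 0`. Over a field with quadratic character `χ`, `G(-h)² = χ(-1) q` reduces the power of
the Gauss sum to `q ^ ((q - 1) / 2) G(h)`, and `G(h) = χ(2) G(1)`.
-/

open Matrix

lemma addChar_sum_eq_prod {ι A M : Type*} [AddCommMonoid A] [CommMonoid M] (ψ : AddChar A M)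
    (s : Finset ι) (f : ι → A) : ψ (∑ i ∈ s, f i) = ∏ i ∈ s, ψ (f i) :=
  map_prod ψ.toMonoidHom (fun i => Multiplicative.ofAdd (f i)) s

section FiniteCommRing

variable {A R : Type*} [CommRing A] [CommRing R]

/-- The matrix of the discrete Fourier transform on the ring `A` with respect to the additive
character `ψ`: rows and columns are indexed by `A`, with no normalising factor. -/
def fourierMatrix (ψ : AddChar A R) : Matrix A A R :=
  of fun i j => ψ (i * j)

@[simp]
lemma fourierMatrix_apply (ψ : AddChar A R) (i j : A) : fourierMatrix ψ i j = ψ (i * j) :=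
  rfl

variable [Fintype A]

/-- The quadratic Gauss sum of `ψ` with coefficient `a`. It is defined without reference to a
multiplicative character, so that it makes sense over every finite commutative ring. -/
def quadGaussSum (ψ : AddChar A R) (a : A) : R :=
  ∑ x, ψ (a * x ^ 2)

lemma three_mul_sum_sq_eq_zero (h2 : IsUnit (2 : A)) : 3 * ∑ x : A, x ^ 2 = 0 := by
  have scale : ∑ x : A, x ^ 2 = 4 * ∑ x : A, x ^ 2 := calc
    ∑ x : A, x ^ 2 = ∑ x : A, (2 * x) ^ 2 := (h2.unit.mulLeft_bijective.sum_comp (· ^ 2)).symm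
    _ = 4 * ∑ x : A, x ^ 2 := by
      rw [Finset.mul_sum]
      exact Finset.sum_congr rfl fun x _ => by ring
  linear_combination -scale

lemma prod_addChar_mul_sq_pow_three (h2 : IsUnit (2 : A)) (ψ : AddChar A R) (a : A) :
    (∏ x, ψ (a * x ^ 2)) ^ 3 = 1 := by
  have hsum : 3 • ∑ x : A, a * x ^ 2 = 0 := by
    rw [← Finset.mul_sum, nsmul_eq_mul]
    linear_combination a * three_mul_sum_sq_eq_zero h2
  rw [← addChar_sum_eq_prod, ← AddChar.map_nsmul_eq_pow, hsum, AddChar.map_zero_eq_one]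

/-- Completing the square: `a (x² + 2 c x) = a (x + c)² - a c²`. -/
lemma sum_addChar_mul_sq_add (ψ : AddChar A R) (a c : A) :
    ∑ x, ψ (a * x ^ 2 + 2 * a * c * x) = ψ (-(a * c ^ 2)) * quadGaussSum ψ a := by
  rw [quadGaussSum, ← Equiv.sum_comp (Equiv.addRight c) fun x => ψ (a * x ^ 2), Finset.mul_sum]
  refine Finset.sum_congr rfl fun x _ => ?_
  rw [← AddChar.map_add_eq_mul, Equiv.coe_addRight]
  congr 1
  ring

section IsDomain

variable [IsDomain R] {ψ : AddChar A R}

/-- If the characteristic `p` of `R` divides the order of `A`, then `ψ (a x) ^ p = 1`, hence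
`ψ (a x) = 1`, for every `x` as soon as `a` has additive order `p`. -/
lemma natCast_card_ne_zero_of_isPrimitive (hψ : ψ.IsPrimitive) : (Fintype.card A : R) ≠ 0 := by
  intro hcard
  have hdvd : ringChar R ∣ Fintype.card A := (ringChar.spec R _).mp hcard
  have hp : Fact (ringChar R).Prime := ⟨(CharP.char_is_prime_or_zero R _).resolve_right
    fun h0 => Fintype.card_ne_zero (Nat.eq_zero_of_zero_dvd (h0 ▸ hdvd))⟩
  obtain ⟨a, ha⟩ := exists_prime_addOrderOf_dvd_card (ringChar R) hdvd
  have ha0 : a ≠ 0 := fun h0 => hp.out.one_lt.ne (by rw [← ha, h0, addOrderOf_zero])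
  refine hψ ha0 (DFunLike.ext _ _ fun x => frobenius_inj R (ringChar R) ?_)
  have hax : ringChar R • (a * x) = 0 := by
    rw [← smul_mul_assoc, ← ha, addOrderOf_nsmul_eq_zero, zero_mul]
  rw [frobenius_def, AddChar.mulShift_apply, ← AddChar.map_nsmul_eq_pow, hax,
    AddChar.map_zero_eq_one, AddChar.one_apply, map_one]

lemma quadGaussSum_mul_quadGaussSum_neg (hψ : ψ.IsPrimitive) {a : A} (ha : IsUnit (2 * a)) :
    quadGaussSum ψ a * quadGaussSum ψ (-a) = Fintype.card A := by
  classical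
  have shift (y : A) : quadGaussSum ψ a * ψ (-a * y ^ 2) =
      ∑ u, ψ (a * u ^ 2) * ψ (y * (2 * a * u)) := by
    rw [mul_comm, neg_mul, ← sum_addChar_mul_sq_add]
    refine Finset.sum_congr rfl fun u _ => ?_
    rw [← AddChar.map_add_eq_mul]
    congr 1
    ring
  calc quadGaussSum ψ a * quadGaussSum ψ (-a)
      = quadGaussSum ψ a * ∑ y, ψ (-a * y ^ 2) := rfl
    _ = ∑ u, ψ (a * u ^ 2) * ∑ y, ψ (y * (2 * a * u)) := by
        simp only [Finset.mul_sum, shift]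
        exact Finset.sum_comm
    _ = ∑ u : A, if u = 0 then (Fintype.card A : R) else 0 := by
        refine Finset.sum_congr rfl fun u _ => ?_
        rw [AddChar.sum_mulShift _ hψ]
        by_cases hu : u = 0 <;> simp [ha.mul_right_eq_zero, hu]
    _ = Fintype.card A := Fintype.sum_ite_eq' _ _

end IsDomain

variable [DecidableEq A]

lemma circulant_mul_fourierMatrix (v : A → R) (ψ : AddChar A R) :
    circulant v * fourierMatrix ψ =
      fourierMatrix ψ * diagonal fun k => ∑ x, v x * ψ (-(x * k)) := by
  ext i k
  rw [mul_diagonal, mul_apply, ← Equiv.sum_comp (Equiv.subLeft i), Finset.mul_sum]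
  refine Finset.sum_congr rfl fun x _ => ?_
  have split : ψ ((i - x) * k) = ψ (i * k) * ψ (-(x * k)) := by
    rw [← AddChar.map_add_eq_mul]
    congr 1
    ring
  rw [circulant_apply, Equiv.subLeft_apply, sub_sub_cancel, fourierMatrix_apply, split,
    fourierMatrix_apply]
  ring

lemma fourierMatrix_eq_diagonal_mul_circulant_mul_diagonal (ψ : AddChar A R) {h : A}
    (hh : 2 * h = 1) :
    fourierMatrix ψ = diagonal (fun i => ψ (h * i ^ 2)) *
      circulant (fun x => ψ (-h * x ^ 2)) * diagonal (fun i => ψ (h * i ^ 2)) := by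
  ext i j
  rw [mul_diagonal, diagonal_mul, circulant_apply, fourierMatrix_apply,
    ← AddChar.map_add_eq_mul, ← AddChar.map_add_eq_mul]
  congr 1
  linear_combination -(i * j) * hh

variable [IsDomain R] {ψ : AddChar A R}

lemma fourierMatrix_mul_fourierMatrix_inv (hψ : ψ.IsPrimitive) :
    fourierMatrix ψ * fourierMatrix ψ⁻¹ = (Fintype.card A : R) • 1 := by
  ext i j
  calc (fourierMatrix ψ * fourierMatrix ψ⁻¹) i j
      = ∑ x, ψ (x * (i - j)) := by
        rw [mul_apply]
        refine Finset.sum_congr rfl fun x _ => ?_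
        rw [fourierMatrix_apply, fourierMatrix_apply, AddChar.inv_apply,
          ← AddChar.map_add_eq_mul]
        congr 1
        ring
    _ = ((Fintype.card A : R) • (1 : Matrix A A R)) i j := by
        rw [AddChar.sum_mulShift _ hψ, Matrix.smul_apply, one_apply]
        simp only [sub_eq_zero, smul_eq_mul, mul_ite, mul_one, mul_zero, Nat.cast_ite,
          Nat.cast_zero]

lemma det_fourierMatrix_ne_zero (hψ : ψ.IsPrimitive) : (fourierMatrix ψ).det ≠ 0 := by
  have hdet := congrArg det (fourierMatrix_mul_fourierMatrix_inv hψ)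
  rw [det_mul, det_smul, det_one, mul_one] at hdet
  exact left_ne_zero_of_mul
    (hdet.trans_ne (pow_ne_zero _ (natCast_card_ne_zero_of_isPrimitive hψ)))

theorem det_circulant_eq_prod (hψ : ψ.IsPrimitive) (v : A → R) :
    (circulant v).det = ∏ k, ∑ x, v x * ψ (-(x * k)) := by
  have hdet := congrArg det (circulant_mul_fourierMatrix v ψ)
  rw [det_mul, det_mul, det_diagonal, mul_comm] at hdet
  exact mul_left_cancel₀ (det_fourierMatrix_ne_zero hψ) hdet

theorem det_fourierMatrix_eq_quadGaussSum_pow (hψ : ψ.IsPrimitive) {h : A} (hh : 2 * h = 1) :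
    (fourierMatrix ψ).det = quadGaussSum ψ (-h) ^ Fintype.card A := by
  have eigenvalue (k : A) :
      ∑ x, ψ (-h * x ^ 2) * ψ (-(x * k)) = ψ (h * k ^ 2) * quadGaussSum ψ (-h) := by
    rw [← neg_neg (h * k ^ 2), ← neg_mul, ← sum_addChar_mul_sq_add]
    refine Finset.sum_congr rfl fun x _ => ?_
    rw [← AddChar.map_add_eq_mul]
    congr 1
    linear_combination x * k * hh
  have hdet := congrArg det (fourierMatrix_eq_diagonal_mul_circulant_mul_diagonal ψ hh)
  rw [det_mul, det_mul, det_diagonal, det_circulant_eq_prod hψ,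
    Finset.prod_congr rfl fun k _ => eigenvalue k, Finset.prod_mul_distrib, Finset.prod_const,
    Finset.card_univ] at hdet
  have hcube := prod_addChar_mul_sq_pow_three (IsUnit.of_mul_eq_one _ hh) ψ h
  linear_combination hdet + quadGaussSum ψ (-h) ^ Fintype.card A * hcube

end FiniteCommRing

section FiniteField

variable {F R : Type*} [Field F] [Fintype F] [DecidableEq F] [CommRing R] [IsDomain R]
  {ψ : AddChar F R}

lemma quadGaussSum_one_eq_gaussSum (hF : ringChar F ≠ 2) (hψ : ψ ≠ 1) :
    quadGaussSum ψ 1 = gaussSum ((quadraticChar F).ringHomComp (Int.castRingHom R)) ψ := by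
  have card_sqrts (t : F) :
      ((Finset.univ.filter fun x : F => x ^ 2 = t).card : R) = quadraticChar F t + 1 := by
    have := quadraticChar_card_sqrts hF t
    simp only [Set.toFinset_ofPred] at this
    exact_mod_cast congrArg (Int.cast (R := R)) this
  calc quadGaussSum ψ 1
      = ∑ t, ∑ x with x ^ 2 = t, ψ (x ^ 2) := by
        simp only [quadGaussSum, one_mul, Finset.sum_fiberwise]
    _ = ∑ t, (quadraticChar F t + 1 : R) * ψ t := by
        refine Finset.sum_congr rfl fun t _ => ?_
        rw [← card_sqrts, ← nsmul_eq_mul]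
        exact Finset.sum_eq_card_nsmul fun x hx => by rw [(Finset.mem_filter.mp hx).2]
    _ = gaussSum ((quadraticChar F).ringHomComp (Int.castRingHom R)) ψ := by
        simp only [add_mul, one_mul, Finset.sum_add_distrib,
          AddChar.sum_eq_zero_of_ne_one hψ, add_zero]
        rfl

lemma quadGaussSum_eq_quadraticChar_mul (hF : ringChar F ≠ 2) (hψ : ψ ≠ 1) {a : F}
    (ha : a ≠ 0) : quadGaussSum ψ a = quadraticChar F a * quadGaussSum ψ 1 := by
  have hχ := (quadraticChar_isQuadratic F).comp (Int.castRingHom R)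
  have hψa : ψ.mulShift a ≠ 1 := AddChar.IsPrimitive.of_ne_one hψ ha
  calc quadGaussSum ψ a
      = quadGaussSum (ψ.mulShift a) 1 := by
        simp only [quadGaussSum, AddChar.mulShift_apply, one_mul]
    _ = quadraticChar F a * quadGaussSum ψ 1 := by
        rw [quadGaussSum_one_eq_gaussSum hF hψa, quadGaussSum_one_eq_gaussSum hF hψ,
          ← Units.val_mk0 ha, gaussSum_mulShift_eq, hχ.inv]
        rfl

lemma quadGaussSum_neg (hF : ringChar F ≠ 2) (hψ : ψ ≠ 1) {a : F} (ha : a ≠ 0) :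
    quadGaussSum ψ (-a) = quadraticChar F (-1) * quadGaussSum ψ a := by
  rw [quadGaussSum_eq_quadraticChar_mul hF hψ (neg_ne_zero.mpr ha),
    quadGaussSum_eq_quadraticChar_mul hF hψ ha, neg_eq_neg_one_mul, map_mul, Int.cast_mul,
    mul_assoc]

/-- The quadratic character may become trivial in `R`, when `R` has characteristic `2`, so
`gaussSum_sq` does not apply; the product `G(a) G(-a)` is insensitive to this. -/
lemma quadGaussSum_sq (hF : ringChar F ≠ 2) (hψ : ψ ≠ 1) {a : F} (ha : a ≠ 0) :
    quadGaussSum ψ a ^ 2 = quadraticChar F (-1) * Fintype.card F := by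
  have hprod := quadGaussSum_mul_quadGaussSum_neg (AddChar.IsPrimitive.of_ne_one hψ)
    (mul_ne_zero (Ring.two_ne_zero hF) ha).isUnit
  have hsq : (quadraticChar F (-1) : R) ^ 2 = 1 := by
    exact_mod_cast congrArg (Int.cast (R := R))
      (quadraticChar_sq_one (neg_ne_zero.mpr (one_ne_zero (α := F))))
  rw [quadGaussSum_neg hF hψ ha] at hprod
  linear_combination quadraticChar F (-1) * hprod - quadGaussSum ψ a ^ 2 * hsq

lemma quadraticChar_neg_one_pow_half_card_succ (hF : ringChar F ≠ 2) :
    quadraticChar F (-1) ^ (Fintype.card F / 2 + 1) = 1 := by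
  rw [quadraticChar_neg_one hF, ZMod.χ₄_eq_neg_one_pow (FiniteField.odd_card_of_char_ne_two hF),
    ← pow_mul]
  exact (Nat.even_mul_succ_self _).neg_one_pow

theorem det_fourierMatrix (hF : ringChar F ≠ 2) (hψ : ψ ≠ 1) :
    (fourierMatrix ψ).det =
      (Fintype.card F : R) ^ (Fintype.card F / 2) * quadGaussSum ψ 2⁻¹ := by
  have h2 : (2 : F) ≠ 0 := Ring.two_ne_zero hF
  have hsign : (quadraticChar F (-1) : R) ^ (Fintype.card F / 2 + 1) = 1 := by
    exact_mod_cast congrArg (Int.cast (R := R)) (quadraticChar_neg_one_pow_half_card_succ hF)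
  have hcard : Fintype.card F = 2 * (Fintype.card F / 2) + 1 := by
    have := FiniteField.odd_card_of_char_ne_two hF
    omega
  calc (fourierMatrix ψ).det
      = quadGaussSum ψ (-2⁻¹) ^ Fintype.card F :=
        det_fourierMatrix_eq_quadGaussSum_pow (AddChar.IsPrimitive.of_ne_one hψ)
          (mul_inv_cancel₀ h2)
    _ = (quadGaussSum ψ (-2⁻¹) ^ 2) ^ (Fintype.card F / 2) * quadGaussSum ψ (-2⁻¹) := by
        rw [← pow_mul, ← pow_succ, ← hcard]
    _ = (quadraticChar F (-1) : R) ^ (Fintype.card F / 2 + 1) *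
          ((Fintype.card F : R) ^ (Fintype.card F / 2) * quadGaussSum ψ 2⁻¹) := by
        rw [quadGaussSum_sq hF hψ (neg_ne_zero.mpr (inv_ne_zero h2)),
          quadGaussSum_neg hF hψ (inv_ne_zero h2)]
        ring
    _ = (Fintype.card F : R) ^ (Fintype.card F / 2) * quadGaussSum ψ 2⁻¹ := by
        rw [hsign, one_mul]

lemma quadGaussSum_inv (hF : ringChar F ≠ 2) (hψ : ψ ≠ 1) {a : F} (ha : a ≠ 0) :
    quadGaussSum ψ a⁻¹ = quadraticChar F a * quadGaussSum ψ 1 := by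
  rw [quadGaussSum_eq_quadraticChar_mul hF hψ (inv_ne_zero ha), ← MulChar.inv_apply',
    (quadraticChar_isQuadratic F).inv]

end FiniteField

lemma pow_val_mul_val_add_div_two {n : ℕ} [NeZero n] (hn : Odd n) {M : Type*} [CommMonoid M]
    {θ : M} (hθ : θ ^ n = 1) {h : ZMod n} (hh : 2 * h = 1) (x : ZMod n) :
    θ ^ (x.val * (x.val + n) / 2) = AddChar.zmodChar n hθ (h * x ^ 2) := by
  have heven : Even (x.val * (x.val + n)) := by
    have := Nat.not_even_iff_odd.mpr hn
    rw [Nat.even_mul, Nat.even_add]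
    tauto
  have hdouble : (2 : ZMod n) * (x.val * (x.val + n) / 2 : ℕ) = x ^ 2 := by
    have := congrArg (Nat.cast (R := ZMod n)) (Nat.two_mul_div_two_of_even heven)
    push_cast at this
    rw [this, ZMod.natCast_self, ZMod.natCast_zmod_val]
    ring
  rw [← AddChar.zmodChar_apply' hθ]
  congr 1
  linear_combination h * hdouble - (x.val * (x.val + n) / 2 : ℕ) * hh

theorem weil_detC_formula_general
    {r : ℕ} [Fact (Nat.Prime r)] (hr : Odd r)
    {R : Type*} [CommRing R] [IsDomain R] {θ : R} (hθ : IsPrimitiveRoot θ r)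
    (C : Matrix (ZMod r) (ZMod r) R)
    (hC : ∀ i j : ZMod r, C i j = θ ^ (i * j).val) :
    C.det = (r : R) ^ ((r - 1) / 2) * ∑ ξ : ZMod r, θ ^ (ξ.val * (ξ.val + r) / 2) ∧
      C.det = ((legendreSym r 2 : ℤ) : R) * (r : R) ^ ((r - 1) / 2)
          * ∑ ξ : ZMod r, θ ^ (ξ * ξ).val := by
  have hchar : ringChar (ZMod r) ≠ 2 := by
    rw [ZMod.ringChar_zmod_n]
    exact hr.ne_two_of_dvd_nat dvd_rfl
  have h2 : (2 : ZMod r) ≠ 0 := Ring.two_ne_zero hchar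
  let ψ := AddChar.zmodChar r hθ.pow_eq_one
  have hψ : ψ ≠ 1 := by
    rw [← AddChar.mulShift_one ψ]
    exact AddChar.zmodChar_primitive_of_primitive_root r hθ one_ne_zero
  have hCψ : C = fourierMatrix ψ := Matrix.ext hC
  have hdet : C.det = (r : R) ^ ((r - 1) / 2) * quadGaussSum ψ 2⁻¹ := by
    have hhalf : (r - 1) / 2 = r / 2 := by
      obtain ⟨m, hm⟩ := hr
      omega
    rw [hCψ, det_fourierMatrix hchar hψ, ZMod.card, hhalf]
  constructor
  · rw [hdet, quadGaussSum, Finset.sum_congr rfl fun ξ _ =>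
      pow_val_mul_val_add_div_two hr hθ.pow_eq_one (mul_inv_cancel₀ h2) ξ]
  · have hsum : quadGaussSum ψ 1 = ∑ ξ : ZMod r, θ ^ (ξ * ξ).val := by
      simp only [quadGaussSum, one_mul, sq]
      rfl
    rw [hdet, quadGaussSum_inv hchar hψ h2, hsum, legendreSym, Int.cast_ofNat]
    ring

/-- Formulae for `det(C)` in terms of Gauss sums, with the Legendre symbol `(2/r)`. -/
theorem weil_detC_formula
    {r : ℕ} [Fact (Nat.Prime r)] (hr : Odd r)
    {𝔽 : Type*} [Field 𝔽] {θ : 𝔽} (hθ : IsPrimitiveRoot θ r)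
    (C : Matrix (ZMod r) (ZMod r) 𝔽)
    (hC : ∀ i j : ZMod r, C i j = θ ^ (i * j).val) :
    C.det = (r : 𝔽) ^ ((r - 1) / 2) * ∑ ξ : ZMod r, θ ^ (ξ.val * (ξ.val + r) / 2) ∧
      C.det = ((legendreSym r 2 : ℤ) : 𝔽) * (r : 𝔽) ^ ((r - 1) / 2)
          * ∑ ξ : ZMod r, θ ^ (ξ * ξ).val :=
  weil_detC_formula_general hr hθ C hC
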